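/- The Kolmogorov–Sinai entropy of the shift on D^ℕ with respect to the Bernoulli measure p^ℕ equals the Shannon entropy H(p) = −Σ_{d∈D} p(d) log p(d). -/

import Mathlib

open MeasureTheory Finset

variable {X : Type*} [MeasurableSpace X]

/-- The Shannon entropy of the partition of `X` obtained by joining the preimages of a
finite partition `P` under the first `k` iterates of `T`:
`H(P ∨ T⁻¹P ∨ ⋯ ∨ T^{-(k-1)}P) = −∑ μ(C) log μ(C)` over cells
`C = ⋂_{i<k} T^{-i}(a i)` with `a i ∈ P`. -/
noncomputable def joinEntropy (T : X → X) (μ : Measure X)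
    (P : Finset (Set X)) (k : ℕ) : ℝ :=
  -∑ a ∈ Fintype.piFinset (fun _ : Fin k => P),
      (μ (⋂ i : Fin k, (T^[(i : ℕ)]) ⁻¹' a i)).toReal
        * Real.log (μ (⋂ i : Fin k, (T^[(i : ℕ)]) ⁻¹' a i)).toReal

/-- A finite measurable partition of `X`. -/
def IsFinPartition (P : Finset (Set X)) : Prop :=
  (∀ A ∈ P, MeasurableSet A) ∧ ((P : Set (Set X)).PairwiseDisjoint id) ∧
    ⋃₀ (P : Set (Set X)) = Set.univ

/-- The Kolmogorov–Sinai (measure-theoretic) entropy of `T` with respect to `μ`: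
the supremum over finite measurable partitions `P` of
`lim_k H(P ∨ ⋯ ∨ T^{-(k-1)}P)/k` (the limit exists by subadditivity; we use `liminf`). -/
noncomputable def ksEntropy (T : X → X) (μ : Measure X) : ℝ :=
  ⨆ P : {P : Finset (Set X) // IsFinPartition P},
    Filter.liminf (fun k : ℕ => joinEntropy T μ P.1 k / k) Filter.atTop


section Ent

/-- Shannon entropy of a finite-valued function. -/
noncomputable def fEnt {Y α : Type*} [MeasurableSpace Y] [Fintype α] (μ : Measure Y) (f : Y → α) : ℝ :=
  ∑ a, Real.negMulLog (μ.real (f ⁻¹' {a}))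

theorem negMulLog_sum_le {β : Type*} (s : Finset β) (q : β → ℝ) (hq : ∀ b ∈ s, 0 ≤ q b) :
    Real.negMulLog (∑ b ∈ s, q b) ≤ ∑ b ∈ s, Real.negMulLog (q b) := by
  unfold Real.negMulLog
  rw [← Finset.sum_neg_distrib, Finset.sum_mul]
  refine Finset.sum_le_sum fun b hb => ?_
  rcases (hq b hb).eq_or_lt with h | h
  · simp [← h]
  · have h1 : q b ≤ ∑ b ∈ s, q b := Finset.single_le_sum hq hb
    have h2 := Real.log_le_log h h1
    nlinarith

variable {Y α β γ : Type*} [MeasurableSpace Y] (μ : Measure Y) [IsProbabilityMeasure μ]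
  [Fintype α] [MeasurableSpace α] [MeasurableSingletonClass α]
  [Fintype β] [MeasurableSpace β] [MeasurableSingletonClass β]
  [Fintype γ] [MeasurableSpace γ] [MeasurableSingletonClass γ]

theorem real_comp (h : Y → β) (hh : Measurable h) (S : Set β) [DecidablePred (· ∈ S)] :
    μ.real (h ⁻¹' S) = ∑ b with b ∈ S, μ.real (h ⁻¹' {b}) := by
  rw [sum_measureReal_preimage_singleton _ (fun b _ => hh (measurableSet_singleton b))]
  congr 1
  ext x
  simp

theorem fEnt_mono (f : Y → α) (h : Y → β) (hh : Measurable h)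
    (hf : ∀ x y, h x = h y → f x = f y) : fEnt μ f ≤ fEnt μ h := by
  classical
  have hne : Nonempty Y := μ.nonempty_of_neZero
  have : Nonempty α := hne.map f
  obtain ⟨g, rfl⟩ : ∃ g : β → α, f = g ∘ h := by
    refine ⟨Function.extend h f (fun _ => Classical.arbitrary α), ?_⟩
    exact (Function.FactorsThrough.extend_comp _ (fun x y => hf x y)).symm
  unfold fEnt
  have : ∀ a, μ.real ((g ∘ h) ⁻¹' {a}) = ∑ b with g b = a, μ.real (h ⁻¹' {b}) := by
    intro a
    rw [Set.preimage_comp, real_comp μ h hh]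
    simp
  simp_rw [this]
  rw [← Finset.sum_fiberwise (s := univ) (g := g) (f := fun b => Real.negMulLog (μ.real (h ⁻¹' {b})))]
  exact Finset.sum_le_sum fun a _ => negMulLog_sum_le _ _ (fun _ _ => measureReal_nonneg)

theorem term_ineq (a b c d : ℝ) (ha : 0 ≤ a) (hab : a ≤ b) (hac : a ≤ c) (hbd : b ≤ d) :
    - a * Real.log a - a * Real.log d + a * Real.log b + a * Real.log c ≤ b * c / d - a := by
  rcases ha.eq_or_lt with h | h
  · subst h
    have hd : 0 ≤ d := hab.trans hbd
    have : 0 ≤ b * c / d := by positivity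
    simpa using this
  · have hb : 0 < b := by linarith
    have hc : 0 < c := by linarith
    have hd : 0 < d := by linarith
    have h1 := Real.log_le_sub_one_of_pos (x := b * c / (a * d)) (by positivity)
    rw [Real.log_div (by positivity) (by positivity), Real.log_mul hb.ne' hc.ne',
      Real.log_mul h.ne' hd.ne'] at h1
    have h2 := mul_le_mul_of_nonneg_left h1 ha
    have h3 : a * (b * c / (a * d) - 1) = b * c / d - a := by field_simp
    linarith

theorem fEnt_submod (f : Y → α) (g : Y → β) (h : Y → γ) (hf : Measurable f) (hg : Measurable g)
    (hh : Measurable h) :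
    fEnt μ (fun x => (f x, g x, h x)) + fEnt μ h
      ≤ fEnt μ (fun x => (f x, h x)) + fEnt μ (fun x => (g x, h x)) := by
  classical
  set q : α → β → γ → ℝ := fun a b c => μ.real ((fun x => (f x, g x, h x)) ⁻¹' {(a, b, c)}) with hq
  have hq0 : ∀ a b c, 0 ≤ q a b c := fun _ _ _ => measureReal_nonneg
  have hm : Measurable (fun x => (f x, g x, h x)) := by fun_prop
  have e1 : ∀ a c, μ.real ((fun x => (f x, h x)) ⁻¹' {(a, c)}) = ∑ b, q a b c := by
    intro a c
    have : (fun x => (f x, h x)) ⁻¹' {(a, c)} =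
      (fun x => (f x, g x, h x)) ⁻¹' {t | t.1 = a ∧ t.2.2 = c} := by ext; simp
    rw [this, real_comp μ _ hm, Finset.sum_filter]
    simp [Fintype.sum_prod_type, q, ite_and]
  have e2 : ∀ b c, μ.real ((fun x => (g x, h x)) ⁻¹' {(b, c)}) = ∑ a, q a b c := by
    intro b c
    have : (fun x => (g x, h x)) ⁻¹' {(b, c)} =
      (fun x => (f x, g x, h x)) ⁻¹' {t | t.2.1 = b ∧ t.2.2 = c} := by ext; simp
    rw [this, real_comp μ _ hm, Finset.sum_filter]
    simp [Fintype.sum_prod_type, q, ite_and]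
  have e3 : ∀ c, μ.real (h ⁻¹' {c}) = ∑ a, ∑ b, q a b c := by
    intro c
    have : h ⁻¹' {c} =
      (fun x => (f x, g x, h x)) ⁻¹' {t | t.2.2 = c} := by ext; simp
    rw [this, real_comp μ _ hm, Finset.sum_filter]
    simp [Fintype.sum_prod_type, q]
  have key : ∀ c, (∑ a, ∑ b, Real.negMulLog (q a b c)) + Real.negMulLog (∑ a, ∑ b, q a b c)
      ≤ (∑ a, Real.negMulLog (∑ b, q a b c)) + ∑ b, Real.negMulLog (∑ a, q a b c) := by
    intro c
    set d := ∑ a, ∑ b, q a b c with hd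
    have t : ∀ a b, - q a b c * Real.log (q a b c) - q a b c * Real.log d
        + q a b c * Real.log (∑ b, q a b c) + q a b c * Real.log (∑ a, q a b c)
        ≤ (∑ b, q a b c) * (∑ a, q a b c) / d - q a b c := by
      intro a b
      apply term_ineq _ _ _ _ (hq0 _ _ _)
      · exact Finset.single_le_sum (f := fun b => q a b c) (fun _ _ => hq0 _ _ _) (mem_univ b)
      · exact Finset.single_le_sum (f := fun a => q a b c) (fun _ _ => hq0 _ _ _) (mem_univ a)
      · exact Finset.single_le_sum (f := fun a => ∑ b, q a b c)
          (fun _ _ => Finset.sum_nonneg fun _ _ => hq0 _ _ _) (mem_univ a)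
    have t2 := Finset.sum_le_sum fun a (_ : a ∈ univ) => Finset.sum_le_sum fun b (_ : b ∈ univ) => t a b
    simp only [Finset.sum_add_distrib, Finset.sum_sub_distrib] at t2
    have s1 : ∑ a, ∑ b, (∑ b, q a b c) * (∑ a, q a b c) / d = d := by
      simp_rw [← Finset.sum_div, ← Finset.mul_sum, ← Finset.sum_mul]
      rw [Finset.sum_comm (f := fun b a => q a b c), ← hd, mul_self_div_self]
    have s2 : ∑ a, ∑ b, q a b c * Real.log d = d * Real.log d := by
      simp_rw [← Finset.sum_mul]; rw [← hd]
    have s3 : ∑ a, ∑ b, q a b c * Real.log (∑ b, q a b c)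
        = ∑ a, (∑ b, q a b c) * Real.log (∑ b, q a b c) := by
      simp_rw [← Finset.sum_mul]
    have s4 : ∑ a, ∑ b, q a b c * Real.log (∑ a, q a b c)
        = ∑ b, (∑ a, q a b c) * Real.log (∑ a, q a b c) := by
      rw [Finset.sum_comm]
      simp_rw [← Finset.sum_mul]
    rw [s1, s2, s3, s4, ← hd] at t2
    simp only [Real.negMulLog, neg_mul, Finset.sum_neg_distrib] at t2 ⊢
    linarith
  have k2 := Finset.sum_le_sum fun c (_ : c ∈ univ) => key c
  simp only [Finset.sum_add_distrib] at k2
  unfold fEnt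
  simp only [Fintype.sum_prod_type, e1, e2, e3]
  change (∑ a, ∑ b, ∑ c, Real.negMulLog (q a b c)) + _ ≤ _
  have r1 : (∑ a, ∑ b, ∑ c, Real.negMulLog (q a b c)) = ∑ c, ∑ a, ∑ b, Real.negMulLog (q a b c) := by
    rw [Finset.sum_comm]
    simp_rw [Finset.sum_comm (s := (univ : Finset α))]
    rw [Finset.sum_comm]
  rw [r1]
  have r2 : ∑ a, ∑ c, Real.negMulLog (∑ b, q a b c) = ∑ c, ∑ a, Real.negMulLog (∑ b, q a b c) :=
    Finset.sum_comm
  have r3 : ∑ b, ∑ c, Real.negMulLog (∑ a, q a b c) = ∑ c, ∑ b, Real.negMulLog (∑ a, q a b c) :=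
    Finset.sum_comm
  rw [r2, r3]
  exact k2

theorem fEnt_cond_mono (f : Y → α) (g : Y → β) (h : Y → γ) (hf : Measurable f) (hg : Measurable g)
    (hh : Measurable h) (hgh : ∀ x y, g x = g y → h x = h y) :
    fEnt μ (fun x => (f x, g x)) - fEnt μ g ≤ fEnt μ (fun x => (f x, h x)) - fEnt μ h := by
  have h1 := fEnt_submod μ f g h hf hg hh
  have h2 : fEnt μ (fun x => (g x, h x)) ≤ fEnt μ g :=
    fEnt_mono μ _ _ hg fun x y e => by simp [e, hgh x y e]
  have h3 : fEnt μ (fun x => (f x, g x)) ≤ fEnt μ (fun x => (f x, g x, h x)) :=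
    fEnt_mono μ _ _ (by fun_prop) fun x y e => by
      simp only [Prod.mk.injEq] at e ⊢; exact ⟨e.1, e.2.1⟩
  linarith

/-- Conditional entropy of a family is at most the sum. -/
theorem fEnt_cond_sum {ι : Type*} [DecidableEq ι] (s : Finset ι) (F : ι → Y → Bool)
    (hF : ∀ i, Measurable (F i)) (g : Y → β) (hg : Measurable g) :
    fEnt μ (fun x => ((fun i : s => F i x), g x)) - fEnt μ g
      ≤ ∑ i ∈ s, (fEnt μ (fun x => (F i x, g x)) - fEnt μ g) := by
  induction s using Finset.induction_on with
  | empty =>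
    simp only [Finset.sum_empty, sub_nonpos]
    exact fEnt_mono μ _ _ hg fun x y e => by
      simp only [Prod.mk.injEq]; exact ⟨Subsingleton.elim _ _, e⟩
  | insert a s ha ih =>
    rw [Finset.sum_insert ha]
    have h1 := fEnt_submod μ (F a) (fun x => (fun i : s => F i x)) g (hF a) (by fun_prop) hg
    have h2 : fEnt μ (fun x => ((fun i : (insert a s : Finset ι) => F i x), g x))
        ≤ fEnt μ (fun x => (F a x, (fun i : s => F i x), g x)) := by
      refine fEnt_mono μ _ _ (by fun_prop) fun x y e => ?_
      simp only [Prod.mk.injEq, funext_iff, Subtype.forall] at e ⊢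
      refine ⟨fun i hi => ?_, e.2.2⟩
      rcases Finset.mem_insert.1 hi with rfl | hi
      · exact e.1
      · exact e.2.1 i hi
    linarith

theorem fEnt_comp_mp (T : Y → Y) (hT : MeasurePreserving T μ μ) (f : Y → α) (hf : Measurable f) :
    fEnt μ (fun x => f (T x)) = fEnt μ f := by
  unfold fEnt
  refine Finset.sum_congr rfl fun a _ => ?_
  rw [← hT.measureReal_preimage (hf (measurableSet_singleton a)).nullMeasurableSet]
  rfl

theorem fEnt_nonneg (f : Y → α) : 0 ≤ fEnt μ f :=
  Finset.sum_nonneg fun _ _ => Real.negMulLog_nonneg measureReal_nonneg measureReal_le_one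

theorem approx_ind (A : Set Y) (hA : MeasurableSet A) (𝒜 : Set (Set Y)) (hd : μ.MeasureDense 𝒜)
    (ε : ℝ) (hε : 0 < ε) : ∃ B ∈ 𝒜, ∀ (f g : Y → Bool), (∀ x, f x = true ↔ x ∈ A) →
      (∀ x, g x = true ↔ x ∈ B) → fEnt μ (fun x => (f x, g x)) - fEnt μ g < ε := by
  have H : ∀ n : ℕ, ∃ t ∈ 𝒜, μ (symmDiff A t) < ENNReal.ofReal (1 / ((n : ℝ) + 1)) := fun n =>
    hd.approx A hA (measure_ne_top _ _) _ (by positivity)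
  choose B hB hB2 using H
  have hBm := fun n => hd.measurable _ (hB n)
  have hlim : Filter.Tendsto (fun n => μ.real (symmDiff A (B n))) Filter.atTop (nhds 0) := by
    refine squeeze_zero (fun _ => measureReal_nonneg) (fun n => ?_) tendsto_one_div_add_atTop_nhds_zero_nat
    exact ENNReal.toReal_le_of_le_ofReal (by positivity) (hB2 n).le
  have l1 : Filter.Tendsto (fun n => μ.real (A \ B n)) Filter.atTop (nhds 0) := by
    refine squeeze_zero (fun _ => measureReal_nonneg) (fun n => ?_) hlim
    exact measureReal_mono (fun x hx => Or.inl hx)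
  have l2 : Filter.Tendsto (fun n => μ.real (B n \ A)) Filter.atTop (nhds 0) := by
    refine squeeze_zero (fun _ => measureReal_nonneg) (fun n => ?_) hlim
    exact measureReal_mono (fun x hx => Or.inr hx)
  have e1 : ∀ n, μ.real (A ∩ B n) = μ.real A - μ.real (A \ B n) := fun n => by
    have := measureReal_inter_add_sdiff (μ := μ) (s := A) (hBm n); linarith
  have e2 : ∀ n, μ.real (B n) = μ.real A - μ.real (A \ B n) + μ.real (B n \ A) := fun n => by
    have := measureReal_inter_add_sdiff (μ := μ) (s := B n) hA
    rw [Set.inter_comm, e1] at this; linarith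
  have e3 : ∀ n, μ.real ((B n)ᶜ) = 1 - (μ.real A - μ.real (A \ B n) + μ.real (B n \ A)) := fun n => by
    rw [probReal_compl_eq_one_sub (hBm n), e2]
  have e4 : ∀ n, μ.real (Aᶜ ∩ (B n)ᶜ) = 1 - μ.real A - μ.real (B n \ A) := fun n => by
    have := measureReal_inter_add_sdiff (μ := μ) (s := Aᶜ) (hBm n)
    rw [probReal_compl_eq_one_sub hA] at this
    have h : Aᶜ ∩ B n = B n \ A := by ext; simp [and_comm]
    have h' : Aᶜ \ B n = Aᶜ ∩ (B n)ᶜ := rfl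
    rw [h, h'] at this; linarith
  obtain ⟨G, hG⟩ : ∃ G : ℝ × ℝ → ℝ, ∀ t, G t = Real.negMulLog (μ.real A - t.1)
      + Real.negMulLog (t.1) + Real.negMulLog (t.2)
      + Real.negMulLog (1 - μ.real A - t.2)
      - (Real.negMulLog (μ.real A - t.1 + t.2) +
        Real.negMulLog (1 - (μ.real A - t.1 + t.2))) := ⟨_, fun _ => rfl⟩
  have C : Continuous G := by
    have c := Real.continuous_negMulLog
    rw [funext hG]
    fun_prop
  have L : Filter.Tendsto (fun n => G (μ.real (A \ B n), μ.real (B n \ A))) Filter.atTop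
      (nhds (G (0, 0))) := (C.tendsto (0, 0)).comp (l1.prodMk_nhds l2)
  have z : G (0, 0) = 0 := by rw [hG]; simp
  rw [z] at L
  obtain ⟨n, hn⟩ := (L.eventually (gt_mem_nhds hε)).exists
  refine ⟨B n, hB n, fun f g hf hg => lt_of_le_of_lt (le_of_eq ?_) hn⟩
  have f1 : (fun x => (f x, g x)) ⁻¹' {(true, true)} = A ∩ B n := by ext x; simp [hf, hg]
  have f2 : (fun x => (f x, g x)) ⁻¹' {(true, false)} = A \ B n := by
    ext x; simp [hf, ← hg]
  have f3 : (fun x => (f x, g x)) ⁻¹' {(false, true)} = B n \ A := by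
    ext x; simp [← hf, hg, and_comm]
  have f4 : (fun x => (f x, g x)) ⁻¹' {(false, false)} = Aᶜ ∩ (B n)ᶜ := by
    ext x; simp [← hf, ← hg]
  have f5 : g ⁻¹' {true} = B n := by ext x; simp [hg]
  have f6 : g ⁻¹' {false} = (B n)ᶜ := by ext x; simp [← hg]
  unfold fEnt
  simp only [Fintype.sum_prod_type, Fintype.sum_bool, f1, f2, f3, f4, f5, f6]
  rw [hG, e1, e2 n, e3, e4]
  ring

end Ent

section Bern

theorem joinEntropy_eq {Y κ : Type*} [MeasurableSpace Y] [Fintype κ] (T : Y → Y) (μ : Measure Y)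
    (P : Finset (Set Y)) (k : ℕ) (e : κ → Set Y) (he : Function.Injective e)
    (hP : ∀ A, A ∈ P ↔ ∃ j, e j = A) (L : Y → κ) (hL : ∀ x j, x ∈ e j ↔ L x = j) :
    joinEntropy T μ P k = fEnt μ (fun x => fun i : Fin k => L (T^[(i : ℕ)] x)) := by
  classical
  unfold joinEntropy fEnt
  rw [← Finset.sum_neg_distrib]
  symm
  refine Finset.sum_bij (fun a _ => fun i => e (a i)) ?_ ?_ ?_ ?_
  · intro a _
    rw [Fintype.mem_piFinset]
    exact fun i => (hP _).2 ⟨_, rfl⟩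
  · intro a _ b _ h
    funext i
    exact he (congrFun h i)
  · intro b hb
    rw [Fintype.mem_piFinset] at hb
    choose a ha using fun i => (hP _).1 (hb i)
    exact ⟨a, mem_univ _, funext ha⟩
  · intro a _
    have : (fun x => fun i : Fin k => L (T^[(i : ℕ)] x)) ⁻¹' {a}
        = ⋂ i : Fin k, (T^[(i : ℕ)]) ⁻¹' (e (a i)) := by
      ext x
      simp [funext_iff, hL]
    rw [this, Real.negMulLog, neg_mul]
    rfl

variable {D : Type*} [Fintype D] [MeasurableSpace D] [DiscreteMeasurableSpace D]

/-- First `n` coordinates. -/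
def pre (D : Type*) (n : ℕ) (x : ℕ → D) : Fin n → D := fun i => x i

theorem pre_meas (n : ℕ) : Measurable (pre D n) := by
  unfold pre; fun_prop

theorem pre_preimage (n : ℕ) (w : Fin n → D) :
    pre D n ⁻¹' {w} = {x | ∀ i : Fin n, x (i : ℕ) = w i} := by
  ext x; simp [pre, funext_iff]

theorem cyl_pre (B : Set (ℕ → D)) (hB : B ∈ measurableCylinders (fun _ : ℕ => D)) :
    ∃ n, ∃ S : Set (Fin n → D), B = pre D n ⁻¹' S := by
  obtain ⟨s, S, -, rfl⟩ := (mem_measurableCylinders _).1 hB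
  have hlt : ∀ i : s, (i : ℕ) < s.sup id + 1 := fun i =>
    Nat.lt_succ_of_le (Finset.le_sup (f := id) i.2)
  refine ⟨s.sup id + 1, {w | (fun i : s => w ⟨i, hlt i⟩) ∈ S}, ?_⟩
  ext x
  rfl

theorem dense_cyl (μ : Measure (ℕ → D)) [IsProbabilityMeasure μ] :
    μ.MeasureDense (measurableCylinders (fun _ : ℕ => D)) :=
  Measure.MeasureDense.of_generateFrom_isSetAlgebra_finite μ
    ⟨empty_mem_measurableCylinders _, fun _ h => compl_mem_measurableCylinders h,
      fun _ _ h h' => union_mem_measurableCylinders h h'⟩ generateFrom_measurableCylinders.symm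

theorem sum_prod_one (p : D → ℝ) (hpsum : ∑ d, p d = 1) (n : ℕ) :
    ∑ w : Fin n → D, ∏ i, p (w i) = 1 := by
  classical
  have := Finset.prod_univ_sum (fun _ : Fin n => (univ : Finset D)) (fun _ d => p d)
  simp only [hpsum, Fintype.piFinset_univ] at this
  rw [← this]; simp

theorem sum_negMulLog_prod (p : D → ℝ) (hpsum : ∑ d, p d = 1) (n : ℕ) :
    ∑ w : Fin n → D, Real.negMulLog (∏ i, p (w i)) = n * ∑ d, Real.negMulLog (p d) := by
  induction n with
  | zero => simp
  | succ n ih =>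
    rw [← (Fin.consEquiv (fun _ : Fin (n + 1) => D)).sum_comp, Fintype.sum_prod_type]
    simp only [Fin.consEquiv_apply, Fin.prod_univ_succ, Fin.cons_zero, Fin.cons_succ,
      Real.negMulLog_mul, Finset.sum_add_distrib]
    simp_rw [← Finset.sum_mul, ← Finset.mul_sum, sum_prod_one p hpsum, ih]
    rw [← Finset.sum_mul, hpsum]
    push_cast; ring

variable (p : D → ℝ) (hp : ∀ d, 0 ≤ p d) (hpsum : ∑ d, p d = 1)
    (μ : Measure (ℕ → D)) [IsProbabilityMeasure μ]
    (hcyl : ∀ (k : ℕ) (w : Fin k → D),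
      μ {x | ∀ i : Fin k, x (i : ℕ) = w i} = ENNReal.ofReal (∏ i, p (w i)))

include hp hcyl in
theorem real_pre (n : ℕ) (w : Fin n → D) : μ.real (pre D n ⁻¹' {w}) = ∏ i, p (w i) := by
  rw [pre_preimage, measureReal_def, hcyl,
    ENNReal.toReal_ofReal (Finset.prod_nonneg fun _ _ => hp _)]

include hp hpsum hcyl in
theorem ent_pre (n : ℕ) : fEnt μ (pre D n) = n * ∑ d, Real.negMulLog (p d) := by
  unfold fEnt
  simp_rw [real_pre p hp μ hcyl]
  exact sum_negMulLog_prod p hpsum n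

include hp hpsum hcyl in
theorem shift_mp (shift : (ℕ → D) → (ℕ → D)) (hshift : ∀ x k, shift x k = x (k + 1)) :
    MeasurePreserving shift μ μ := by
  classical
  have hm : Measurable shift := by
    rw [measurable_pi_iff]
    intro k
    simp_rw [hshift]
    fun_prop
  refine ⟨hm, ?_⟩
  have : IsProbabilityMeasure (μ.map shift) := Measure.isProbabilityMeasure_map hm.aemeasurable
  refine MeasureTheory.ext_of_generate_finite _ generateFrom_measurableCylinders.symm
    isPiSystem_measurableCylinders ?_ (by simp)
  intro B hB
  obtain ⟨n, S, rfl⟩ := cyl_pre B hB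
  rw [← measureReal_eq_measureReal_iff, real_comp _ _ (pre_meas n), real_comp _ _ (pre_meas n)]
  refine Finset.sum_congr rfl fun w _ => ?_
  rw [real_pre p hp μ hcyl, map_measureReal_apply hm (pre_meas n (measurableSet_singleton _))]
  have e : shift ⁻¹' (pre D n ⁻¹' {w}) = pre D (n + 1) ⁻¹' {v | Fin.tail v = w} := by
    ext x
    simp [pre, funext_iff, Fin.tail, hshift]
  rw [e, real_comp _ _ (pre_meas _), Finset.sum_filter,
    ← (Fin.consEquiv (fun _ : Fin (n + 1) => D)).sum_comp, Fintype.sum_prod_type]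
  simp only [real_pre p hp μ hcyl]
  have tl : ∀ (d : D) (v : Fin n → D),
      Fin.tail ((Fin.consEquiv (fun _ : Fin (n + 1) => D)) (d, v)) = v := fun d v => rfl
  simp only [Set.mem_setOf_eq, tl]
  simp only [Fin.consEquiv_apply, Fin.prod_univ_succ, Fin.cons_zero, Fin.cons_succ, Finset.sum_ite_eq', mem_univ, if_true]
  rw [← Finset.sum_mul, hpsum, one_mul]

include hp hpsum hcyl in
theorem upper (shift : (ℕ → D) → (ℕ → D)) (hshift : ∀ x k, shift x k = x (k + 1))
    (P : Finset (Set (ℕ → D))) (hP : IsFinPartition P) (ε : ℝ) (hε : 0 < ε) :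
    ∃ n : ℕ, ∀ k : ℕ, joinEntropy shift μ P k ≤
      (n + k : ℕ) * (∑ d, Real.negMulLog (p d)) + k * ε := by
  classical
  obtain ⟨hPm, hPd, hPu⟩ := hP
  have hT := shift_mp p hp hpsum μ hcyl shift hshift
  have hTi : ∀ i x j, shift^[i] x j = x (i + j) := by
    intro i
    induction i with
    | zero => simp
    | succ i ih => intro x j; rw [Function.iterate_succ_apply, ih, hshift]; congr 1; ring
  have hmem : ∀ x, ∃ A : P, x ∈ A.1 := fun x => by
    have : x ∈ ⋃₀ (P : Set (Set (ℕ → D))) := hPu ▸ Set.mem_univ x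
    obtain ⟨A, hA, hx⟩ := this
    exact ⟨⟨A, hA⟩, hx⟩
  choose L hL using hmem
  have hL' : ∀ x (A : P), x ∈ A.1 ↔ L x = A := by
    intro x A
    refine ⟨fun h => ?_, fun h => h ▸ hL x⟩
    by_contra hne
    have := hPd (L x).2 A.2 (fun h => hne (Subtype.ext h))
    exact Set.disjoint_left.1 this (hL x) h
  -- indicator functions
  let ind : P → (ℕ → D) → Bool := fun A x => decide (x ∈ A.1)
  have hind : ∀ A, Measurable (ind A) := fun A => by
    refine measurable_to_bool ?_
    have : ind A ⁻¹' {true} = A.1 := by ext; simp [ind]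
    rw [this]; exact hPm _ A.2
  have hcard : 0 < (P.card : ℝ) + 1 := by positivity
  have H : ∀ A : P, ∃ n, fEnt μ (fun x => (ind A x, pre D n x)) - fEnt μ (pre D n)
      < ε / (P.card + 1) := by
    intro A
    obtain ⟨B, hB, hB'⟩ := approx_ind μ A.1 (hPm _ A.2) _ (dense_cyl μ) (ε / (P.card + 1))
      (by positivity)
    obtain ⟨n, S, hS⟩ := cyl_pre B hB
    have hBm : Measurable (fun x => decide (x ∈ B)) := by
      refine measurable_to_bool ?_
      have : (fun x => decide (x ∈ B)) ⁻¹' {true} = B := by ext; simp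
      rw [this]; exact (dense_cyl μ).measurable _ hB
    refine ⟨n, lt_of_le_of_lt (fEnt_cond_mono μ (ind A) (pre D n) (fun x => decide (x ∈ B)) (hind A)
      (pre_meas n) hBm ?_) (hB' _ _ (by simp [ind]) (by simp))⟩
    intro x y h
    simp [hS, h]
  choose N hN using H
  have pmono : ∀ {m n : ℕ}, m ≤ n → ∀ x y, pre D n x = pre D n y → pre D m x = pre D m y := by
    intro m n h x y hxy
    funext i
    exact congrFun hxy ⟨i, i.2.trans_le h⟩
  let n := univ.sup N
  have hn : ∀ A, fEnt μ (fun x => (ind A x, pre D n x)) - fEnt μ (pre D n)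
      ≤ ε / (P.card + 1) := fun A =>
    (fEnt_cond_mono μ (ind A) (pre D n) (pre D (N A)) (hind A) (pre_meas _) (pre_meas _)
      (pmono (Finset.le_sup (mem_univ A)))).trans (hN A).le
  refine ⟨n, fun k => ?_⟩
  have hTk := fun i : ℕ => hT.iterate i
  rw [joinEntropy_eq shift μ P k (fun A : P => A.1) Subtype.val_injective (by simp) L hL']
  let F : Fin k × P → (ℕ → D) → Bool := fun q x => ind q.2 (shift^[(q.1 : ℕ)] x)
  have hF : ∀ q, Measurable (F q) := fun q => (hind q.2).comp (hTk q.1).measurable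
  have s1 : fEnt μ (fun x => fun i : Fin k => L (shift^[(i : ℕ)] x)) ≤
      fEnt μ (fun x => ((fun q : (univ : Finset (Fin k × P)) => F q x), pre D (n + k) x)) := by
    letI : MeasurableSpace P := ⊤
    have hm := pre_meas (D := D) (n + k)
    refine fEnt_mono μ _ _ (by fun_prop) fun x y e => ?_
    simp only [Prod.mk.injEq] at e
    funext i
    have := congrFun e.1 ⟨(i, L (shift^[(i : ℕ)] x)), mem_univ _⟩
    simp only [F, ind, decide_eq_decide] at this
    exact ((hL' _ _).1 (this.1 (hL _))).symm
  have s2 := fEnt_cond_sum μ (univ : Finset (Fin k × P)) F hF (pre D (n + k)) (pre_meas _)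
  have s3 : ∀ q : Fin k × P, fEnt μ (fun x => (F q x, pre D (n + k) x)) - fEnt μ (pre D (n + k))
      ≤ ε / (P.card + 1) := by
    rintro ⟨i, A⟩
    have m1 : Measurable (fun x => pre D n (shift^[(i : ℕ)] x)) :=
      (pre_meas n).comp (hTk i).measurable
    have := fEnt_cond_mono μ (F (i, A)) (pre D (n + k)) (fun x => pre D n (shift^[(i : ℕ)] x))
      (hF _) (pre_meas _) m1 (by
        intro x y h
        funext j
        simp only [pre, hTi]
        exact congrFun h ⟨i + j, by omega⟩)
    refine this.trans ?_
    have c1 := fEnt_comp_mp μ _ (hTk i) (pre D n) (pre_meas n)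
    have c2 := fEnt_comp_mp μ _ (hTk i) (fun x => (ind A x, pre D n x))
      ((hind A).prodMk (pre_meas n))
    rw [c1]
    exact (le_of_eq (by rw [← c2])).trans (hn A)
  have s4 := Finset.sum_le_sum fun q (_ : q ∈ (univ : Finset (Fin k × P))) => s3 q
  rw [Finset.sum_const, Finset.card_univ, Fintype.card_prod, Fintype.card_fin, Fintype.card_coe,
    nsmul_eq_mul] at s4
  have s5 : ((k * P.card : ℕ) : ℝ) * (ε / (P.card + 1)) ≤ k * ε := by
    rw [mul_div_assoc', div_le_iff₀ hcard]
    push_cast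
    have : 0 ≤ (k : ℝ) * ε := by positivity
    nlinarith
  have s6 := ent_pre p hp hpsum μ hcyl (n + k)
  have s7 := s2.trans (s4.trans s5)
  rw [sub_le_iff_le_add, s6] at s7
  exact (s1.trans s7).trans_eq (add_comm _ _)

end Bern

/-- The Kolmogorov–Sinai entropy of the shift on `D^ℕ` with respect to the
Bernoulli measure `p^ℕ` (characterized by its values on cylinders) equals the Shannon
entropy `H(p) = −∑_{d ∈ D} p d log (p d)`. -/
theorem stmt12 {D : Type*} [Fintype D] [Nonempty D]
    [MeasurableSpace D] [DiscreteMeasurableSpace D]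
    (p : D → ℝ) (hp : ∀ d, 0 ≤ p d) (hpsum : ∑ d, p d = 1)
    (μ : Measure (ℕ → D)) [IsProbabilityMeasure μ]
    (hcyl : ∀ (k : ℕ) (w : Fin k → D),
      μ {x | ∀ i : Fin k, x (i : ℕ) = w i} = ENNReal.ofReal (∏ i, p (w i)))
    (shift : (ℕ → D) → (ℕ → D)) (hshift : ∀ x k, shift x k = x (k + 1)) :
    ksEntropy shift μ = -∑ d, p d * Real.log (p d) := by
  classical
  have hH : -∑ d, p d * Real.log (p d) = ∑ d, Real.negMulLog (p d) := by
    simp [Real.negMulLog]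
  rw [hH]
  set h := ∑ d, Real.negMulLog (p d) with hh
  have hTi : ∀ i x j, shift^[i] x j = x (i + j) := by
    intro i
    induction i with
    | zero => simp
    | succ i ih => intro x j; rw [Function.iterate_succ_apply, ih, hshift]; congr 1; ring
  -- upper bound
  have hup : ∀ P : {P : Finset (Set (ℕ → D)) // IsFinPartition P},
      Filter.liminf (fun k : ℕ => joinEntropy shift μ P.1 k / k) Filter.atTop ≤ h := by
    rintro ⟨P, hP⟩
    refine le_of_forall_pos_le_add fun ε hε => ?_
    obtain ⟨n, hn⟩ := upper p hp hpsum μ hcyl shift hshift P hP ε hε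
    have hlim : Filter.Tendsto (fun k : ℕ => h + ε + (n * h) / (k : ℝ)) Filter.atTop
        (nhds (h + ε + 0)) :=
      tendsto_const_nhds.add (tendsto_const_div_atTop_nhds_zero_nat _)
    rw [add_zero] at hlim
    rw [← hlim.liminf_eq]
    have hnn : ∀ k : ℕ, 0 ≤ joinEntropy shift μ P k / k := by
      intro k
      refine div_nonneg ?_ (Nat.cast_nonneg k)
      unfold joinEntropy
      rw [← Finset.sum_neg_distrib]
      refine Finset.sum_nonneg fun a _ => ?_
      rw [← neg_mul]
      exact Real.negMulLog_nonneg ENNReal.toReal_nonneg measureReal_le_one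
    refine Filter.liminf_le_liminf ?_ ?_ ?_
    · filter_upwards [Filter.eventually_gt_atTop 0] with k hk
      have hk' : (0 : ℝ) < k := by exact_mod_cast hk
      rw [div_le_iff₀ hk']
      have := hn k
      push_cast at this
      have e : (h + ε + n * h / k) * k = (n + k) * h + k * ε := by field_simp; ring
      rw [e]; exact this
    · exact Filter.isBoundedUnder_of ⟨0, hnn⟩
    · exact hlim.isCoboundedUnder_ge
  -- generating partition
  let e : D → Set (ℕ → D) := fun d => {x | x 0 = d}
  let P₀ : Finset (Set (ℕ → D)) := univ.image e
  have hP₀ : IsFinPartition P₀ := by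
    refine ⟨?_, ?_, ?_⟩
    · intro A hA
      obtain ⟨d, -, rfl⟩ := Finset.mem_image.1 hA
      exact (measurable_pi_apply (X := fun _ : ℕ => D) 0) (measurableSet_singleton d)
    · intro A hA B hB hne
      obtain ⟨d, -, rfl⟩ := Finset.mem_image.1 hA
      obtain ⟨d', -, rfl⟩ := Finset.mem_image.1 hB
      refine Set.disjoint_left.2 fun x hx hx' => hne ?_
      have h1 : x 0 = d := hx
      have h2 : x 0 = d' := hx'
      rw [← h1, ← h2]
    · refine Set.eq_univ_of_forall fun x => ⟨e (x 0), ?_, rfl⟩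
      exact Finset.mem_coe.2 (Finset.mem_image_of_mem _ (mem_univ _))
  have hj : ∀ k, joinEntropy shift μ P₀ k = k * h := by
    intro k
    rw [joinEntropy_eq shift μ P₀ k e ?_ (by simp [P₀]) (fun x => x 0) (fun x j => Iff.rfl),
      ← ent_pre p hp hpsum μ hcyl k]
    · congr 1
      funext x i
      simp [hTi, pre]
    · intro d d' hd
      have : (fun _ : ℕ => d) ∈ e d' := hd ▸ (rfl : (fun _ : ℕ => d) 0 = d)
      exact this
  have hlow : Filter.liminf (fun k : ℕ => joinEntropy shift μ P₀ k / k) Filter.atTop = h := by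
    refine Filter.Tendsto.liminf_eq (tendsto_const_nhds.congr' ?_)
    filter_upwards [Filter.eventually_gt_atTop 0] with k hk
    rw [hj]
    have hk' : (k : ℝ) ≠ 0 := by exact_mod_cast hk.ne'
    field_simp
  haveI : Nonempty {P : Finset (Set (ℕ → D)) // IsFinPartition P} := ⟨⟨P₀, hP₀⟩⟩
  refine le_antisymm (ciSup_le hup) ?_
  have hb : BddAbove (Set.range fun P : {P : Finset (Set (ℕ → D)) // IsFinPartition P} =>
      Filter.liminf (fun k : ℕ => joinEntropy shift μ P.1 k / k) Filter.atTop) :=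
    ⟨h, by rintro _ ⟨P, rfl⟩; exact hup P⟩
  exact hlow.symm.le.trans (le_ciSup hb ⟨P₀, hP₀⟩)
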